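/- Let G be a bipartite graph with partite sets P = {p_1,…,p_N} and Q = {q_1,…,q_N}, with M edges and no isolated vertices, and let κ be an integer with 1 ≤ κ ≤ N. Then G contains a κ-biclique — sets P' ⊆ P and Q' ⊆ Q with |P'| = |Q'| = κ such that every vertex of P' is adjacent to every vertex of Q' — if and only if the ensemble {T_P, T_Q} of the biclique construction can be pruned by subtree replacement operations so that the two resulting trees together have exactly 2(N+2)+2κ inner nodes and the resulting ensemble makes at most M − κ² errors on the constructed training set. -/

import Mathlib

/-- The two class labels. -/
inductive Label where
  | blue
  | red
deriving DecidableEq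

/-- A decision tree over examples `ι → ℝ` with classes `{blue, red}`:
every inner node carries a feature and a threshold, every leaf a class label.
An example goes to the left child if its value in the node's feature is at most
the threshold, and to the right child otherwise. -/
inductive DTree (ι : Type) where
  | leaf (c : Label)
  | node (feat : ι) (thr : ℝ) (left right : DTree ι)

namespace DTree

variable {ι : Type}

/-- The class that a decision tree assigns to an example. -/
noncomputable def classify : DTree ι → (ι → ℝ) → Label
  | .leaf c, _ => c
  | .node f t l r, e => if e f ≤ t then l.classify e else r.classify e

/-- The routing path of an example (`false` = left child, `true` = right child);
it is the position of the leaf of the example. -/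
noncomputable def route : DTree ι → (ι → ℝ) → List Bool
  | .leaf _, _ => []
  | .node f t l r, e => if e f ≤ t then false :: l.route e else true :: r.route e

/-- The subtree rooted at a position (`none` if the position is not a node). -/
def subtreeAt : DTree ι → List Bool → Option (DTree ι)
  | T, [] => some T
  | .leaf _, _ :: _ => none
  | .node _ _ l r, b :: p => (if b then r else l).subtreeAt p

/-- Replace the subtree at a given position by another tree. -/
def replaceAt : DTree ι → List Bool → DTree ι → DTree ι
  | _, [], T' => T'
  | .leaf c, _ :: _, _ => .leaf c
  | .node f t l r, b :: p, T' =>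
      if b then .node f t l (r.replaceAt p T') else .node f t (l.replaceAt p T') r

/-- The number of inner nodes of a decision tree. -/
def innerCount : DTree ι → ℕ
  | .leaf _ => 0
  | .node _ _ l r => 1 + l.innerCount + r.innerCount

/-- The position `p` is an inner node of `T`. -/
def IsInnerPos (T : DTree ι) (p : List Bool) : Prop :=
  ∃ f t l r, T.subtreeAt p = some (.node f t l r)

/-- The position `p` is a node of `T`. -/
def IsNodePos (T : DTree ι) (p : List Bool) : Prop :=
  (T.subtreeAt p).isSome

/-- The feature and threshold of the inner node at position `p`. -/
def cutAt (T : DTree ι) (p : List Bool) : Option (ι × ℝ) :=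
  match T.subtreeAt p with
  | some (.node f t _ _) => some (f, t)
  | _ => none

/-- The subtree raising operation at position `q` keeping the child in direction `b`:
the subtree rooted at `q` is replaced by the subtree rooted at its `b`-child; it prunes
the node at `q` together with all inner nodes of the subtree rooted at the other child. -/
def raiseAt (T : DTree ι) (q : List Bool) (b : Bool) : DTree ι :=
  match T.subtreeAt q with
  | some (.node _ _ l r) => T.replaceAt q (if b then r else l)
  | _ => T

end DTree

/-- `E[T,p]`: the examples of `E` whose routing through `T` passes the position `p`. -/
noncomputable def reach {ι : Type} (E : Finset (ι → ℝ)) (T : DTree ι) (p : List Bool) :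
    Finset (ι → ℝ) :=
  E.filter fun e => p <+: T.route e

/-- The number of errors of `T` on the training set `(E, lab)`. -/
noncomputable def errCount {ι : Type} (T : DTree ι) (E : Finset (ι → ℝ))
    (lab : (ι → ℝ) → Label) : ℕ :=
  (E.filter fun e => T.classify e ≠ lab e).card

/-- A most frequent label of the labeled set `(E, lab)` (blue in case of a tie). -/
def majorityLabel {ι : Type} (E : Finset (ι → ℝ)) (lab : (ι → ℝ) → Label) : Label :=
  if (E.filter fun e => lab e = Label.red).card ≤ (E.filter fun e => lab e = Label.blue).card
  then Label.blue else Label.red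

/-- One subtree replacement operation: some inner node of `T` is replaced by a leaf
labeled with a most frequent label of the examples reaching it. -/
def ReplStep {ι : Type} (E : Finset (ι → ℝ)) (lab : (ι → ℝ) → Label)
    (T T' : DTree ι) : Prop :=
  ∃ p, T.IsInnerPos p ∧
    T' = T.replaceAt p (.leaf (majorityLabel (reach E T p) lab))

/-- `T` is a reasonable decision tree for `(E, lab)`: every node is reached by some
example and every leaf carries a most frequent label of the examples reaching it. -/
def Reasonable {ι : Type} (E : Finset (ι → ℝ)) (lab : (ι → ℝ) → Label)
    (T : DTree ι) : Prop :=
  (∀ p, T.IsNodePos p → (reach E T p).Nonempty) ∧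
  (∀ p c, T.subtreeAt p = some (.leaf c) → ∀ c' : Label,
    ((reach E T p).filter fun e => lab e = c').card ≤
      ((reach E T p).filter fun e => lab e = c).card)

/-- Apply a sequence of raising operations (given by positions and kept directions). -/
def applySeq {ι : Type} : DTree ι → List (List Bool × Bool) → DTree ι
  | T, [] => T
  | T, (q, b) :: rest => applySeq (T.raiseAt q b) rest

/-- Each raising operation of the sequence is applied at an inner node. -/
def ValidSeq {ι : Type} : DTree ι → List (List Bool × Bool) → Prop
  | _, [] => True
  | T, (q, b) :: rest => T.IsInnerPos q ∧ ValidSeq (T.raiseAt q b) rest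

/-- The total number of inner nodes pruned by a sequence of raising operations. -/
def seqPruned {ι : Type} : DTree ι → List (List Bool × Bool) → ℕ
  | _, [] => 0
  | T, (q, b) :: rest =>
      (match T.subtreeAt q with
        | some (.node _ _ l r) => 1 + DTree.innerCount (if b then l else r)
        | _ => 0) + seqPruned (T.raiseAt q b) rest

/-- `T'` is obtained from `T` by a (possibly empty) sequence of subtree raising
operations. -/
def RaisedFrom {ι : Type} (T T' : DTree ι) : Prop :=
  ∃ steps, ValidSeq T steps ∧ applySeq T steps = T'

/-- `T'` is obtained from `T` by a sequence of subtree raising operations pruning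
exactly `m` inner nodes in total. -/
def RaisedFromPruning {ι : Type} (T : DTree ι) (m : ℕ) (T' : DTree ι) : Prop :=
  ∃ steps, ValidSeq T steps ∧ seqPruned T steps = m ∧ applySeq T steps = T'

/-- Tracking the position of a node through one raising operation: nodes strictly
below the raised node on the discarded side, and the raised node itself, are pruned
(`none`); all other nodes survive at a possibly shifted position. -/
def stepMap (q : List Bool) (b : Bool) (p : List Bool) : Option (List Bool) :=
  if q <+: p then
    if q ++ [b] <+: p then some (q ++ p.drop (q.length + 1)) else none
  else some p

/-- Tracking the position of a node through a sequence of raising operations. -/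
def seqMap : List (List Bool × Bool) → List Bool → Option (List Bool)
  | [], p => some p
  | (q, b) :: rest, p => (stepMap q b p).bind (seqMap rest)

/-- The number of errors of `T` on a multiset of labeled examples. -/
noncomputable def errCountM {ι : Type} (T : DTree ι) (E : Multiset ((ι → ℝ) × Label)) : ℕ :=
  (E.filter fun q => T.classify q.1 ≠ q.2).card

/-- The examples of a multiset training set reaching position `p` of `T`. -/
noncomputable def reachM {ι : Type} (E : Multiset ((ι → ℝ) × Label)) (T : DTree ι)
    (p : List Bool) : Multiset ((ι → ℝ) × Label) :=
  E.filter fun q => p <+: T.route q.1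

/-- A most frequent label of a multiset of labeled examples (blue in case of
a tie). -/
def majorityM {ι : Type} (E : Multiset ((ι → ℝ) × Label)) : Label :=
  if (E.filter fun q => q.2 = Label.red).card ≤ (E.filter fun q => q.2 = Label.blue).card
  then Label.blue else Label.red

/-- One subtree replacement operation on a tree with respect to a multiset training
set: some inner node is replaced by a leaf labeled with a most frequent label of
the examples reaching it (blue in case of a tie). -/
noncomputable def ReplStepM {ι : Type} (E : Multiset ((ι → ℝ) × Label))
    (T T' : DTree ι) : Prop :=
  ∃ p, T.IsInnerPos p ∧ T' = T.replaceAt p (.leaf (majorityM (reachM E T p)))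

/-- One subtree replacement operation on an ensemble of two decision trees:
a replacement operation is applied to one of the two trees. -/
noncomputable def EnsStep {ι : Type} (E : Multiset ((ι → ℝ) × Label))
    (P P' : DTree ι × DTree ι) : Prop :=
  (ReplStepM E P.1 P'.1 ∧ P.2 = P'.2) ∨ (P.1 = P'.1 ∧ ReplStepM E P.2 P'.2)

/-- The class an ensemble of two trees assigns to an example: blue if at least one
of the trees assigns blue (blue is the dominant label), red otherwise. -/
noncomputable def classifyEns {ι : Type} (T₁ T₂ : DTree ι) (e : ι → ℝ) : Label :=
  if T₁.classify e = Label.blue ∨ T₂.classify e = Label.blue then Label.blue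
  else Label.red

/-- The number of errors of an ensemble of two trees on a multiset training set. -/
noncomputable def errCountEns {ι : Type} (T₁ T₂ : DTree ι)
    (E : Multiset ((ι → ℝ) × Label)) : ℕ :=
  (E.filter fun q => classifyEns T₁ T₂ q.1 ≠ q.2).card

/-- The training set of the biclique construction over the three features
`d_P = 0`, `d_Q = 1`, `d_E = 2`, with `M = |E(G)|` and edges given as pairs
`(i, j) ∈ Fin N × Fin N` (1-based values in the examples): one red edge example
`(i+1, j+1, 1)` per edge; `4NM` red enforcing examples `(N+1, 0, 0)` and `4NM` red
enforcing examples `(0, N+1, 0)`; `M` blue forcing examples `(N+1, 0, 1)` and `M`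
blue forcing examples `(0, N+1, 1)`; and, per vertex `i`, `M` blue separation
examples `(i+1, 0, 0)` and `M` blue separation examples `(0, i+1, 0)`. -/
noncomputable def E15 (N : ℕ) (Eg : Finset (Fin N × Fin N)) :
    Multiset ((Fin 3 → ℝ) × Label) :=
  let M := Eg.card
  (Eg.val.map fun q =>
    ((![((q.1 : ℕ) : ℝ) + 1, ((q.2 : ℕ) : ℝ) + 1, 1] : Fin 3 → ℝ), Label.red))
  + Multiset.replicate (4 * N * M) ((![(N : ℝ) + 1, 0, 0] : Fin 3 → ℝ), Label.red)
  + Multiset.replicate (4 * N * M) ((![0, (N : ℝ) + 1, 0] : Fin 3 → ℝ), Label.red)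
  + Multiset.replicate M ((![(N : ℝ) + 1, 0, 1] : Fin 3 → ℝ), Label.blue)
  + Multiset.replicate M ((![0, (N : ℝ) + 1, 1] : Fin 3 → ℝ), Label.blue)
  + (Finset.univ.val.bind fun i : Fin N =>
      Multiset.replicate M ((![((i : ℕ) : ℝ) + 1, 0, 0] : Fin 3 → ℝ), Label.blue)
      + Multiset.replicate M ((![0, ((i : ℕ) : ℝ) + 1, 0] : Fin 3 → ℝ), Label.blue))

/-- A path of cuts, each with a given feature, threshold and left subtree; the path
continues to the right. -/
def chainT {ι : Type} (cuts : List (ι × ℝ × DTree ι)) (tail : DTree ι) : DTree ι :=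
  cuts.foldr (fun c acc => DTree.node c.1 c.2.1 c.2.2 acc) tail

/-- The tree `T_P` (for `fS = 0 = d_P`) resp. `T_Q` (for `fS = 1 = d_Q`) of the
biclique construction: the root-to-leaf path of cuts `fS ≤ 0, fS ≤ 1, …, fS ≤ N`,
`d_E ≤ 0`; the left child of `fS ≤ 0` is a red leaf; the left child of each cut
`fS ≤ i` (for `i = 1, …, N`) is the `d_E ≤ 0` cut of vertex `i` with a blue left
child and a red right child; the final `d_E ≤ 0` cut on the path has a red left
child and a blue right child. -/
noncomputable def Tside (N : ℕ) (fS : Fin 3) : DTree (Fin 3) :=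
  DTree.node fS 0 (.leaf .red)
    (chainT ((List.range N).map fun i =>
        (fS, ((i : ℝ) + 1), DTree.node 2 0 (.leaf .blue) (.leaf .red)))
      (DTree.node 2 0 (.leaf .red) (.leaf .blue)))

namespace DTree

variable {ι : Type}

/-- Replacing a node that is not on the routing path of `e` does not affect `e`. -/
theorem route_classify_replaceAt_of_not_prefix (T L : DTree ι) (q : List Bool) (e : ι → ℝ)
    (h : ¬ q <+: T.route e) :
    (T.replaceAt q L).route e = T.route e ∧ (T.replaceAt q L).classify e = T.classify e := by
  induction T generalizing q with
  | leaf c =>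
    cases q with
    | nil => simp at h
    | cons b q => simp [replaceAt]
  | node f t l r ihl ihr =>
    cases q with
    | nil => simp at h
    | cons b q =>
      by_cases hc : e f ≤ t <;> cases b <;>
        simp_all only [replaceAt, route, classify, List.cons_prefix_cons, if_true, if_false,
          true_and, false_and, not_false_eq_true, Bool.false_eq_true, and_self, reduceCtorEq]

/-- After a node on the routing path of `e` is replaced by a leaf, `e` ends in that leaf. -/
theorem route_classify_replaceAt_leaf (T : DTree ι) (c : Label) (q : List Bool) (e : ι → ℝ)
    (h : q <+: T.route e) :
    (T.replaceAt q (.leaf c)).route e = q ∧ (T.replaceAt q (.leaf c)).classify e = c := by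
  induction T generalizing q with
  | leaf c' =>
    cases q with
    | nil => simp [replaceAt, route, classify]
    | cons b q => simp [route] at h
  | node f t l r ihl ihr =>
    cases q with
    | nil => simp [replaceAt, route, classify]
    | cons b q =>
      by_cases hc : e f ≤ t <;> cases b <;>
        simp_all only [replaceAt, route, classify, List.cons_prefix_cons, if_true, if_false,
          true_and, false_and, Bool.false_eq_true, and_self, reduceCtorEq]

end DTree

namespace Biclique

open DTree

/-- The example with value `x` in feature `f`, value `z` in feature `d_E` and `0` elsewhere. -/
def axis (f : Fin 3) (x z : ℝ) : Fin 3 → ℝ :=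
  fun c => if c = 2 then z else if c = f then x else 0

theorem axis_self {f : Fin 3} (hf : f ≠ 2) (x z : ℝ) : axis f x z f = x := by
  simp [axis, hf]

theorem axis_two (f : Fin 3) (x z : ℝ) : axis f x z 2 = z := by
  simp [axis]

theorem axis_other {f g : Fin 3} (hg : g ≠ 2) (hgf : g ≠ f) (x z : ℝ) : axis f x z g = 0 := by
  simp [axis, hg, hgf]

theorem axis_zero_eq (x z : ℝ) : (![x, 0, z] : Fin 3 → ℝ) = axis 0 x z := by
  funext c; fin_cases c <;> simp [axis]

theorem axis_one_eq (x z : ℝ) : (![0, x, z] : Fin 3 → ℝ) = axis 1 x z := by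
  funext c; fin_cases c <;> simp [axis]

/-- The edge example of the pair `q`. -/
noncomputable def edgeEx {N : ℕ} (q : Fin N × Fin N) : Fin 3 → ℝ :=
  ![((q.1 : ℕ) : ℝ) + 1, ((q.2 : ℕ) : ℝ) + 1, 1]

variable {N : ℕ}

theorem countP_E15 (Eg : Finset (Fin N × Fin N)) (p : (Fin 3 → ℝ) × Label → Prop)
    [DecidablePred p] :
    (E15 N Eg).countP p =
      (Eg.filter fun q => p (edgeEx q, .red)).card
      + (if p (axis 0 (N + 1) 0, .red) then 4 * N * Eg.card else 0)
      + (if p (axis 1 (N + 1) 0, .red) then 4 * N * Eg.card else 0)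
      + (if p (axis 0 (N + 1) 1, .blue) then Eg.card else 0)
      + (if p (axis 1 (N + 1) 1, .blue) then Eg.card else 0)
      + ((∑ i : Fin N, if p (axis 0 ((i : ℕ) + 1) 0, .blue) then Eg.card else 0)
        + ∑ i : Fin N, if p (axis 1 ((i : ℕ) + 1) 0, .blue) then Eg.card else 0) := by
  have hrep : ∀ (n : ℕ) (a : (Fin 3 → ℝ) × Label),
      Multiset.countP p (Multiset.replicate n a) = if p a then n else 0 := by
    intro n a
    rw [Multiset.countP_eq_card_filter]
    split_ifs with h
    · rw [Multiset.filter_eq_self.2]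
      · simp
      · intro b hb
        rwa [Multiset.eq_of_mem_replicate hb]
    · rw [Multiset.filter_eq_nil.2]
      · simp
      · intro b hb
        rwa [Multiset.eq_of_mem_replicate hb]
  have hbind : ∀ (s : Multiset (Fin N)) (g : Fin N → Multiset ((Fin 3 → ℝ) × Label)),
      (s.bind g).countP p = (s.map fun i => (g i).countP p).sum := by
    intro s g
    induction s using Multiset.induction_on with
    | empty => simp
    | cons a s ih => simp [ih]
  simp only [E15, Multiset.countP_add, hrep, hbind, Multiset.countP_map, axis_zero_eq,
    axis_one_eq, ← Finset.sum_add_distrib]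
  rfl

theorem majorityM_filter_E15 (Eg : Finset (Fin N × Fin N)) (r : (Fin 3 → ℝ) → Prop)
    [DecidablePred r] :
    majorityM ((E15 N Eg).filter fun q => r q.1) =
      if (Eg.filter fun q => r (edgeEx q)).card
          + (if r (axis 0 (N + 1) 0) then 4 * N * Eg.card else 0)
          + (if r (axis 1 (N + 1) 0) then 4 * N * Eg.card else 0)
        ≤ (if r (axis 0 (N + 1) 1) then Eg.card else 0)
          + (if r (axis 1 (N + 1) 1) then Eg.card else 0)
          + ((∑ i : Fin N, if r (axis 0 ((i : ℕ) + 1) 0) then Eg.card else 0)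
            + ∑ i : Fin N, if r (axis 1 ((i : ℕ) + 1) 0) then Eg.card else 0)
      then .blue else .red := by
  unfold majorityM
  simp only [Multiset.filter_filter, ← Multiset.countP_eq_card_filter, countP_E15]
  simp

theorem sum_ite_card_le (r : Fin N → Prop) [DecidablePred r] (M : ℕ) :
    (∑ i : Fin N, if r i then M else 0) ≤ N * M := by
  calc (∑ i : Fin N, if r i then M else 0) ≤ ∑ _i : Fin N, M :=
        Finset.sum_le_sum fun i _ => by split_ifs <;> simp
    _ = N * M := by simp

/-- The label of a leaf replacing the root is red. -/
theorem majorityM_root (Eg : Finset (Fin N × Fin N)) (hN : 0 < N) (hM : 0 < Eg.card)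
    (T : DTree (Fin 3)) : majorityM (reachM (E15 N Eg) T []) = .red := by
  unfold reachM
  rw [majorityM_filter_E15 Eg (fun e => [] <+: T.route e)]
  simp only [List.nil_prefix, if_true]
  rw [if_neg]
  simp only [Finset.filter_true, Finset.sum_const, Finset.card_univ, Fintype.card_fin, smul_eq_mul]
  nlinarith

/-- A node on the side `0 < f` reached by the enforcing examples has red majority. -/
theorem majorityM_filter_of_enforcing (Eg : Finset (Fin N × Fin N)) (hN : 0 < N)
    (hM : 0 < Eg.card) {f : Fin 3} (hf : f ≠ 2) (r : (Fin 3 → ℝ) → Prop) [DecidablePred r]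
    (h : r (axis f (N + 1) 0)) (hpos : ∀ e, r e → 0 < e f) :
    majorityM ((E15 N Eg).filter fun q => r q.1) = .red := by
  rw [majorityM_filter_E15, if_neg]
  have hNM : Eg.card ≤ N * Eg.card := Nat.le_mul_of_pos_left _ hN
  have hf' : f = 0 ∨ f = 1 := by omega
  have hother : ∀ g x z, g ≠ f → ¬ r (axis g x z) := fun g x z hg hr =>
    (hpos _ hr).ne' (axis_other hf (Ne.symm hg) x z)
  have hS0 := sum_ite_card_le (N := N) (fun i => r (axis 0 ((i : ℕ) + 1) 0)) Eg.card
  have hS1 := sum_ite_card_le (N := N) (fun i => r (axis 1 ((i : ℕ) + 1) 0)) Eg.card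
  rcases hf' with rfl | rfl
  · simp only [hother 1 _ _ (by decide), h, if_true, if_false, Finset.sum_const_zero]
    split_ifs <;> nlinarith
  · simp only [hother 0 _ _ (by decide), h, if_true, if_false, Finset.sum_const_zero]
    split_ifs <;> nlinarith

/-- A node reached by the separation examples of a vertex but by no enforcing example has
blue majority. -/
theorem majorityM_filter_of_separation (Eg : Finset (Fin N × Fin N)) {f : Fin 3} (hf : f ≠ 2)
    (r : (Fin 3 → ℝ) → Prop) [DecidablePred r] (h : ¬ r (axis f (N + 1) 0))
    (hpos : ∀ e, r e → 0 < e f) (i : Fin N) (hi : r (axis f ((i : ℕ) + 1) 0)) :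
    majorityM ((E15 N Eg).filter fun q => r q.1) = .blue := by
  rw [majorityM_filter_E15, if_pos]
  have hf' : f = 0 ∨ f = 1 := by omega
  have hother : ∀ g x z, g ≠ f → ¬ r (axis g x z) := fun g x z hg hr =>
    (hpos _ hr).ne' (axis_other hf (Ne.symm hg) x z)
  have hedge := Finset.card_filter_le Eg fun q => r (edgeEx q)
  have hsum := Finset.single_le_sum
    (f := fun i : Fin N => if r (axis f ((i : ℕ) + 1) 0) then Eg.card else 0)
    (fun _ _ => Nat.zero_le _) (Finset.mem_univ i)
  simp only [hi, if_true] at hsum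
  rcases hf' with rfl | rfl
  · simp only [hother 1 _ _ (by decide), h, if_false]
    omega
  · simp only [hother 0 _ _ (by decide), h, if_false]
    omega

/-- The path of cuts `f ≤ i + 1` for the vertices `i` of `l`, where the vertex cuts outside
`K` have been replaced by blue leaves. -/
noncomputable def vertexChain (f : Fin 3) (K : Finset (Fin N)) : List (Fin N) → DTree (Fin 3)
  | [] => .node 2 0 (.leaf .red) (.leaf .blue)
  | i :: l => .node f ((i : ℕ) + 1)
      (if i ∈ K then .node 2 0 (.leaf .blue) (.leaf .red) else .leaf .blue) (vertexChain f K l)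

/-- The tree `T_P` or `T_Q` in which exactly the vertex cuts in `K` are kept. -/
noncomputable def sideTree (f : Fin 3) (K : Finset (Fin N)) : DTree (Fin 3) :=
  .node f 0 (.leaf .red) (vertexChain f K (List.finRange N))

theorem Tside_eq_sideTree (f : Fin 3) : Tside N f = sideTree f (Finset.univ : Finset (Fin N)) := by
  have h : ∀ l : List (Fin N), vertexChain f Finset.univ l =
      chainT ((l.map Fin.val).map fun i : ℕ =>
        (f, ((i : ℝ) + 1), DTree.node 2 0 (.leaf .blue) (.leaf .red)))
        (DTree.node 2 0 (.leaf .red) (.leaf .blue)) := by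
    intro l
    induction l with
    | nil => rfl
    | cons i l ih => simp [vertexChain, ih, chainT]
  rw [sideTree, h, List.map_coe_finRange_eq_range]
  unfold Tside
  simp only [List.bind_eq_flatMap, List.pure_def, ← List.map_eq_flatMap, List.map_map,
    Function.comp_def]

theorem innerCount_vertexChain (f : Fin 3) (K : Finset (Fin N)) (l : List (Fin N)) :
    (vertexChain f K l).innerCount = l.length + 1 + (l.filter (· ∈ K)).length := by
  induction l with
  | nil => rfl
  | cons i l ih =>
    by_cases hi : i ∈ K <;> simp [vertexChain, innerCount, ih, hi] <;> omega

theorem innerCount_sideTree (f : Fin 3) (K : Finset (Fin N)) :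
    (sideTree f K).innerCount = N + 2 + K.card := by
  have h : ((List.finRange N).filter (· ∈ K)).length = K.card := by
    rw [← List.toFinset_card_of_nodup ((List.nodup_finRange N).filter _)]
    congr 1
    ext i
    simp
  simp only [sideTree, innerCount, innerCount_vertexChain, h, List.length_finRange]
  omega

theorem classify_vertexChain_vertex {f : Fin 3} (K : Finset (Fin N)) (l : List (Fin N))
    (hl : l.Pairwise (· < ·)) (i : Fin N) (hi : i ∈ l) (e : Fin 3 → ℝ)
    (he : e f = (i : ℕ) + 1) :
    (vertexChain f K l).classify e = if i ∈ K ∧ ¬ e 2 ≤ 0 then .red else .blue := by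
  induction l with
  | nil => simp at hi
  | cons j l ih =>
    rw [List.pairwise_cons] at hl
    rcases List.mem_cons.1 hi with rfl | hi
    · by_cases hK : i ∈ K <;> by_cases h2 : e 2 ≤ 0 <;>
        simp [vertexChain, classify, he, hK, h2]
    · have hji : ((j : ℕ) : ℝ) < (i : ℕ) := by exact_mod_cast hl.1 i hi
      have hc : ¬ e f ≤ (j : ℕ) + 1 := by rw [he]; linarith
      simpa [vertexChain, classify, hc] using ih hl.2 hi

theorem classify_vertexChain_end {f : Fin 3} (K : Finset (Fin N)) (l : List (Fin N))
    (e : Fin 3 → ℝ) (he : e f = N + 1) :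
    (vertexChain f K l).classify e = if e 2 ≤ 0 then .red else .blue := by
  induction l with
  | nil => simp [vertexChain, classify]
  | cons j l ih =>
    have hj : ((j : ℕ) : ℝ) < N := by exact_mod_cast j.2
    have hc : ¬ e f ≤ (j : ℕ) + 1 := by rw [he]; linarith
    simpa [vertexChain, classify, hc] using ih

theorem classify_sideTree_vertex {f : Fin 3} (K : Finset (Fin N)) (i : Fin N) (e : Fin 3 → ℝ)
    (he : e f = (i : ℕ) + 1) :
    (sideTree f K).classify e = if i ∈ K ∧ ¬ e 2 ≤ 0 then .red else .blue := by
  have hc : ¬ e f ≤ 0 := by rw [he, not_le]; positivity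
  simpa [sideTree, classify, hc] using
    classify_vertexChain_vertex K _ (List.pairwise_lt_finRange N) i (List.mem_finRange i) e he

theorem classify_sideTree_end {f : Fin 3} (K : Finset (Fin N)) (e : Fin 3 → ℝ)
    (he : e f = N + 1) :
    (sideTree f K).classify e = if e 2 ≤ 0 then .red else .blue := by
  have hc : ¬ e f ≤ 0 := by rw [he, not_le]; positivity
  simpa [sideTree, classify, hc] using classify_vertexChain_end K _ e he

theorem vertexChain_erase_of_notMem (f : Fin 3) (K : Finset (Fin N)) (l : List (Fin N))
    (i : Fin N) (hi : i ∉ l) : vertexChain f (K.erase i) l = vertexChain f K l := by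
  induction l with
  | nil => rfl
  | cons j l ih =>
    simp only [List.mem_cons, not_or] at hi
    simp [vertexChain, ih hi.2, Finset.mem_erase, Ne.symm hi.1]

/-- `q` is the position of the cut of the kept vertex `i` in `X`, and pruning it yields `X'`. -/
structure IsVertexCut (f : Fin 3) (X X' : DTree (Fin 3)) (i : Fin N) (q : List Bool) : Prop where
  inner : X.IsInnerPos q
  replace : X.replaceAt q (.leaf .blue) = X'
  separation : q <+: X.route (axis f ((i : ℕ) + 1) 0)
  enforcing : ¬ q <+: X.route (axis f (N + 1) 0)

theorem IsVertexCut.cons {f : Fin 3} (hf : f ≠ 2) {X X' : DTree (Fin 3)} {i j : Fin N}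
    {q : List Bool} (h : IsVertexCut f X X' i q) (hji : j < i) (L : DTree (Fin 3)) :
    IsVertexCut f (.node f ((j : ℕ) + 1) L X) (.node f ((j : ℕ) + 1) L X') i (true :: q) where
  inner := by
    obtain ⟨g, t, l, r, h'⟩ := h.inner
    exact ⟨g, t, l, r, by simpa [subtreeAt] using h'⟩
  replace := by simp [replaceAt, h.replace]
  separation := by
    simp [route, axis_self hf, List.cons_prefix_cons, h.separation, hji.not_ge]
  enforcing := by
    simp [route, axis_self hf, List.cons_prefix_cons, h.enforcing, j.2.not_ge]

theorem IsVertexCut.vertexChain_cons {f : Fin 3} (hf : f ≠ 2) {K : Finset (Fin N)}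
    {l : List (Fin N)} {i j : Fin N} {q : List Bool}
    (h : IsVertexCut f (vertexChain f K l) (vertexChain f (K.erase i) l) i q) (hji : j < i) :
    IsVertexCut f (vertexChain f K (j :: l)) (vertexChain f (K.erase i) (j :: l)) i
      (true :: q) := by
  simpa [vertexChain, Finset.mem_erase, hji.ne] using h.cons hf hji
    (if j ∈ K then .node 2 0 (.leaf .blue) (.leaf .red) else .leaf .blue)

theorem isVertexCut_head {f : Fin 3} (hf : f ≠ 2) (K : Finset (Fin N)) (l : List (Fin N))
    (i : Fin N) (hi : i ∉ l) (hK : i ∈ K) :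
    IsVertexCut f (vertexChain f K (i :: l)) (vertexChain f (K.erase i) (i :: l)) i [false] where
  inner := ⟨2, 0, .leaf .blue, .leaf .red, by simp [vertexChain, hK, subtreeAt]⟩
  replace := by
    simp [vertexChain, replaceAt, vertexChain_erase_of_notMem f K l i hi]
  separation := by simp [vertexChain, route, axis_self hf, List.cons_prefix_cons]
  enforcing := by
    simp [vertexChain, route, axis_self hf, List.cons_prefix_cons, i.2.not_ge]

theorem exists_isVertexCut {f : Fin 3} (hf : f ≠ 2) (K : Finset (Fin N)) (l : List (Fin N))
    (hl : l.Pairwise (· < ·)) (i : Fin N) (hi : i ∈ l) (hK : i ∈ K) :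
    ∃ q, IsVertexCut f (vertexChain f K l) (vertexChain f (K.erase i) l) i q := by
  induction l with
  | nil => simp at hi
  | cons j l ih =>
    rw [List.pairwise_cons] at hl
    rcases List.mem_cons.1 hi with rfl | hi
    · exact ⟨[false], isVertexCut_head hf K l i (fun h => lt_irrefl _ (hl.1 i h)) hK⟩
    · obtain ⟨q, hq⟩ := ih hl.2 hi
      exact ⟨true :: q, hq.vertexChain_cons hf (hl.1 i hi)⟩

/-- Every inner node of a vertex chain is a vertex cut or lies on the main path. -/
theorem isVertexCut_or_prefix {f : Fin 3} (hf : f ≠ 2) (K : Finset (Fin N)) (l : List (Fin N))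
    (hl : l.Pairwise (· < ·)) (q : List Bool) (hq : (vertexChain f K l).IsInnerPos q) :
    (∃ i ∈ l, IsVertexCut f (vertexChain f K l) (vertexChain f (K.erase i) l) i q) ∨
      (∀ z, q <+: (vertexChain f K l).route (axis f (N + 1) z)) := by
  cases q with
  | nil => exact Or.inr fun z => List.nil_prefix
  | cons b q =>
    induction l generalizing b q with
    | nil =>
      obtain ⟨g, t, l, r, h⟩ := hq
      cases b <;> cases q <;> simp [vertexChain, subtreeAt] at h
    | cons j l ih =>
      rw [List.pairwise_cons] at hl
      cases b with
      | false =>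
        left
        obtain ⟨g, t, l', r, h⟩ := hq
        by_cases hK : j ∈ K
        · cases q with
          | nil => exact ⟨j, by simp, isVertexCut_head hf K l j (fun h => lt_irrefl _ (hl.1 j h))
              hK⟩
          | cons b q => cases b <;> cases q <;> simp [vertexChain, subtreeAt, hK] at h
        · cases q <;> simp [vertexChain, subtreeAt, hK] at h
      | true =>
        have hprefix : ∀ z, true :: q <+: (vertexChain f K (j :: l)).route (axis f (N + 1) z) ↔
            q <+: (vertexChain f K l).route (axis f (N + 1) z) := by
          intro z
          simp [vertexChain, route, axis_self hf, List.cons_prefix_cons, j.2.not_ge]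
        cases q with
        | nil => exact Or.inr fun z => (hprefix z).2 List.nil_prefix
        | cons b q =>
          obtain ⟨g, t, l', r, h⟩ := hq
          have hinner : (vertexChain f K l).IsInnerPos (b :: q) :=
            ⟨g, t, l', r, by simpa [vertexChain, subtreeAt] using h⟩
          rcases ih hl.2 b q hinner with ⟨i, hil, hi⟩ | h
          · exact Or.inl ⟨i, List.mem_cons_of_mem _ hil, hi.vertexChain_cons hf (hl.1 i hil)⟩
          · exact Or.inr fun z => (hprefix z).2 (h z)

/-- A node `true :: q` is reached by the examples with `0 < f` that reach `q` in the right
subtree. -/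
theorem reachM_cons_true (E : Multiset ((Fin 3 → ℝ) × Label)) (f : Fin 3) (L X : DTree (Fin 3))
    (q : List Bool) :
    reachM E (.node f 0 L X) (true :: q) = E.filter fun p => 0 < p.1 f ∧ q <+: X.route p.1 := by
  unfold reachM
  refine Multiset.filter_congr fun p _ => ?_
  by_cases hp : p.1 f ≤ 0
  · simp [route, hp, List.cons_prefix_cons, hp.not_gt]
  · simp only [route, hp, if_false, List.cons_prefix_cons, true_and, not_le.1 hp]

theorem replStepM_sideTree (Eg : Finset (Fin N × Fin N)) {f : Fin 3} (hf : f ≠ 2)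
    (K : Finset (Fin N)) (i : Fin N) (hi : i ∈ K) :
    ReplStepM (E15 N Eg) (sideTree f K) (sideTree f (K.erase i)) := by
  obtain ⟨q, hq⟩ := exists_isVertexCut hf K _ (List.pairwise_lt_finRange N) i
    (List.mem_finRange i) hi
  obtain ⟨g, t, l, r, h⟩ := hq.inner
  refine ⟨true :: q, ⟨g, t, l, r, by simpa [sideTree, subtreeAt] using h⟩, ?_⟩
  rw [sideTree, sideTree, reachM_cons_true,
    majorityM_filter_of_separation Eg hf (fun e => 0 < e f ∧ q <+: (vertexChain f K _).route e)
      (fun h => hq.enforcing h.2) (fun e h => h.1) i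
      ⟨by rw [axis_self hf]; positivity, hq.separation⟩]
  simp [replaceAt, hq.replace]

/-- The shapes a tree `T_P` or `T_Q` can take under subtree replacements: only vertex cuts are
pruned, or a node of the main path is pruned and the forcing examples are classified red. -/
inductive PrunedSide (N : ℕ) (f : Fin 3) : DTree (Fin 3) → Prop
  | intact (K : Finset (Fin N)) : PrunedSide N f (sideTree f K)
  | path (X : DTree (Fin 3)) (hclass : X.classify (axis f (N + 1) 1) = .red)
      (hroute : X.route (axis f (N + 1) 1) = X.route (axis f (N + 1) 0)) :
      PrunedSide N f (.node f 0 (.leaf .red) X)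
  | root : PrunedSide N f (.leaf .red)

theorem PrunedSide.classify_of_zero {f : Fin 3} {T : DTree (Fin 3)} (h : PrunedSide N f T)
    {e : Fin 3 → ℝ} (he : e f = 0) : T.classify e = .red := by
  cases h <;> simp [sideTree, classify, he]

theorem PrunedSide.intact_or_classify {f : Fin 3} (hf : f ≠ 2) {T : DTree (Fin 3)}
    (h : PrunedSide N f T) :
    (∃ K : Finset (Fin N), T = sideTree f K) ∨ T.classify (axis f (N + 1) 1) = .red := by
  cases h with
  | intact K => exact Or.inl ⟨K, rfl⟩
  | path X hclass hroute =>
    right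
    have hc : ¬ (N : ℝ) + 1 ≤ 0 := by rw [not_le]; positivity
    simp [classify, axis_self hf, hc, hclass]
  | root => exact Or.inr rfl

/-- The shape of a tree after pruning a node on the route of the enforcing and the forcing
examples. -/
theorem PrunedSide.replaceAt_path (Eg : Finset (Fin N × Fin N)) (hN : 0 < N)
    (hM : 0 < Eg.card) {f : Fin 3} (hf : f ≠ 2) (X : DTree (Fin 3)) (q : List Bool)
    (hq : ∀ z, z = 0 ∨ z = 1 → q <+: X.route (axis f (N + 1) z)) :
    PrunedSide N f ((DTree.node f 0 (.leaf .red) X).replaceAt (true :: q)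
      (.leaf (majorityM (reachM (E15 N Eg) (.node f 0 (.leaf .red) X) (true :: q))))) := by
  rw [reachM_cons_true,
    majorityM_filter_of_enforcing Eg hN hM hf (fun e => 0 < e f ∧ q <+: X.route e)
      ⟨by rw [axis_self hf]; positivity, hq 0 (Or.inl rfl)⟩ (fun e h => h.1)]
  have h0 := route_classify_replaceAt_leaf X .red q _ (hq 0 (Or.inl rfl))
  have h1 := route_classify_replaceAt_leaf X .red q _ (hq 1 (Or.inr rfl))
  simpa [replaceAt] using PrunedSide.path _ h1.2 (h1.1.trans h0.1.symm)

theorem PrunedSide.step (Eg : Finset (Fin N × Fin N)) (hN : 0 < N) (hM : 0 < Eg.card)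
    {f : Fin 3} (hf : f ≠ 2) {T T' : DTree (Fin 3)} (h : PrunedSide N f T)
    (hstep : ReplStepM (E15 N Eg) T T') : PrunedSide N f T' := by
  obtain ⟨p, hp, rfl⟩ := hstep
  rcases p with - | ⟨b, q⟩
  · rw [majorityM_root Eg hN hM]
    cases T <;> exact .root
  obtain ⟨g, t, l, r, hsub⟩ := hp
  cases h with
  | root => simp [subtreeAt] at hsub
  | intact K =>
    cases b with
    | false => cases q <;> simp [sideTree, subtreeAt] at hsub
    | true =>
      have hinner : (vertexChain f K (List.finRange N)).IsInnerPos q :=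
        ⟨g, t, l, r, by simpa [sideTree, subtreeAt] using hsub⟩
      rcases isVertexCut_or_prefix hf K _ (List.pairwise_lt_finRange N) q hinner with
        ⟨i, -, hi⟩ | hq
      · rw [sideTree, reachM_cons_true,
          majorityM_filter_of_separation Eg hf
            (fun e => 0 < e f ∧ q <+: (vertexChain f K _).route e)
            (fun h => hi.enforcing h.2) (fun e h => h.1) i
            ⟨by rw [axis_self hf]; positivity, hi.separation⟩]
        simpa [sideTree, replaceAt, hi.replace] using PrunedSide.intact (f := f) (K.erase i)
      · exact .replaceAt_path Eg hN hM hf _ q fun z _ => hq z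
  | path X hclass hroute =>
    cases b with
    | false => cases q <;> simp [subtreeAt] at hsub
    | true =>
      by_cases hq : q <+: X.route (axis f (N + 1) 1)
      · refine .replaceAt_path Eg hN hM hf X q fun z hz => ?_
        rcases hz with rfl | rfl
        · rwa [← hroute]
        · exact hq
      · have h1 := route_classify_replaceAt_of_not_prefix X
          (.leaf (majorityM (reachM (E15 N Eg) (.node f 0 (.leaf .red) X) (true :: q)))) q _ hq
        have h0 := route_classify_replaceAt_of_not_prefix X
          (.leaf (majorityM (reachM (E15 N Eg) (.node f 0 (.leaf .red) X) (true :: q)))) q _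
          (hroute ▸ hq)
        simpa [replaceAt] using PrunedSide.path _ (h1.2.trans hclass)
          (h1.1.trans (hroute.trans h0.1.symm))

theorem prunedSide_of_reflTransGen (Eg : Finset (Fin N × Fin N)) (hN : 0 < N)
    (hM : 0 < Eg.card) {R : DTree (Fin 3) × DTree (Fin 3)}
    (h : Relation.ReflTransGen (EnsStep (E15 N Eg)) (Tside N 0, Tside N 1) R) :
    PrunedSide N 0 R.1 ∧ PrunedSide N 1 R.2 := by
  induction h with
  | refl =>
    exact ⟨Tside_eq_sideTree (N := N) 0 ▸ .intact _,
      Tside_eq_sideTree (N := N) 1 ▸ .intact _⟩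
  | tail _ hstep ih =>
    rcases hstep with ⟨hs, heq⟩ | ⟨heq, hs⟩
    · exact ⟨ih.1.step Eg hN hM (by decide) hs, heq ▸ ih.2⟩
    · exact ⟨heq ▸ ih.1, ih.2.step Eg hN hM (by decide) hs⟩

/-- Removing one kept vertex at a time, a relation that allows erasing relates `univ` to every
set. -/
theorem reflTransGen_of_erase {α β : Type*} [Fintype α] [DecidableEq α] (s : β → β → Prop)
    (t : Finset α → β) (h : ∀ K, ∀ i ∈ K, s (t K) (t (K.erase i))) (K : Finset α) :
    Relation.ReflTransGen s (t Finset.univ) (t K) := by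
  rw [← compl_compl K]
  induction Kᶜ using Finset.induction_on with
  | empty => simpa using Relation.ReflTransGen.refl
  | insert a A ha ih =>
    rw [Finset.compl_insert]
    exact ih.tail (h _ a (by simpa using ha))

theorem reflTransGen_sideTree (Eg : Finset (Fin N × Fin N)) (K L : Finset (Fin N)) :
    Relation.ReflTransGen (EnsStep (E15 N Eg)) (Tside N 0, Tside N 1)
      (sideTree 0 K, sideTree 1 L) := by
  rw [Tside_eq_sideTree, Tside_eq_sideTree]
  exact (reflTransGen_of_erase _ (fun K => (sideTree 0 K, sideTree 1 Finset.univ))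
    (fun K i hi => Or.inl ⟨replStepM_sideTree Eg (by decide) K i hi, rfl⟩) K).trans
    (reflTransGen_of_erase _ (fun L => (sideTree 0 K, sideTree 1 L))
    (fun L i hi => Or.inr ⟨rfl, replStepM_sideTree Eg (by decide) L i hi⟩) L)

theorem errCountEns_sideTree (Eg : Finset (Fin N × Fin N)) (K L : Finset (Fin N)) :
    errCountEns (sideTree 0 K) (sideTree 1 L) (E15 N Eg) =
      (Eg.filter fun q => ¬ (q.1 ∈ K ∧ q.2 ∈ L)).card := by
  have hedge : ∀ q : Fin N × Fin N, classifyEns (sideTree 0 K) (sideTree 1 L) (edgeEx q) ≠ .red ↔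
      ¬ (q.1 ∈ K ∧ q.2 ∈ L) := by
    intro q
    rw [classifyEns, classify_sideTree_vertex K q.1 (edgeEx q) rfl,
      classify_sideTree_vertex L q.2 (edgeEx q) rfl]
    by_cases h1 : q.1 ∈ K <;> by_cases h2 : q.2 ∈ L <;> simp [h1, h2, edgeEx]
  have h0 : ∀ (f : Fin 3) (A : Finset (Fin N)) (e : Fin 3 → ℝ), e f = 0 →
      (sideTree f A).classify e = .red := fun f A e he =>
    (PrunedSide.intact A).classify_of_zero he
  have hz0 : ∀ x z, axis 0 x z 1 = 0 := axis_other (by decide) (by decide)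
  have hz1 : ∀ x z, axis 1 x z 0 = 0 := axis_other (by decide) (by decide)
  have hs0 : ∀ x z, axis 0 x z 0 = x := axis_self (by decide)
  have hs1 : ∀ x z, axis 1 x z 1 = x := axis_self (by decide)
  have hN0 : ∀ z, classifyEns (sideTree 0 K) (sideTree 1 L) (axis 0 (N + 1) z) =
      if z ≤ 0 then .red else .blue := by
    intro z
    rw [classifyEns, h0 1 L _ (hz0 _ _), classify_sideTree_end K _ (hs0 _ _), axis_two]
    split_ifs <;> simp_all
  have hN1 : ∀ z, classifyEns (sideTree 0 K) (sideTree 1 L) (axis 1 (N + 1) z) =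
      if z ≤ 0 then .red else .blue := by
    intro z
    rw [classifyEns, h0 0 K _ (hz1 _ _), classify_sideTree_end L _ (hs1 _ _), axis_two]
    split_ifs <;> simp_all
  have hv0 : ∀ i : Fin N, classifyEns (sideTree 0 K) (sideTree 1 L) (axis 0 ((i : ℕ) + 1) 0) =
      .blue := by
    intro i
    simp [classifyEns, classify_sideTree_vertex K i _ (hs0 _ _), axis_two]
  have hv1 : ∀ i : Fin N, classifyEns (sideTree 0 K) (sideTree 1 L) (axis 1 ((i : ℕ) + 1) 0) =
      .blue := by
    intro i
    simp [classifyEns, classify_sideTree_vertex L i _ (hs1 _ _), axis_two]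
  rw [errCountEns, ← Multiset.countP_eq_card_filter, countP_E15]
  simp only [hedge, hN0, hN1, hv0, hv1]
  simp

/-- If both trees classify the forcing examples of one side red, there are at least `M`
errors. -/
theorem card_le_errCountEns (Eg : Finset (Fin N × Fin N)) {f : Fin 3} (hf : f ≠ 2)
    (T₁ T₂ : DTree (Fin 3)) (h₁ : T₁.classify (axis f (N + 1) 1) = .red)
    (h₂ : T₂.classify (axis f (N + 1) 1) = .red) :
    Eg.card ≤ errCountEns T₁ T₂ (E15 N Eg) := by
  have h : classifyEns T₁ T₂ (axis f (N + 1) 1) ≠ .blue := by simp [classifyEns, h₁, h₂]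
  rw [errCountEns, ← Multiset.countP_eq_card_filter, countP_E15]
  have hf' : f = 0 ∨ f = 1 := by omega
  rcases hf' with rfl | rfl <;> simp only [h, if_true, ne_eq, not_false_eq_true] <;> omega

end Biclique

/-- Let `G` be a bipartite graph with partite sets `Fin N` and
`Fin N` (edges `Eg ⊆ Fin N × Fin N`, `M = |Eg|`) without isolated vertices, and let
`1 ≤ κ ≤ N`. Then `G` contains a `κ`-biclique iff the ensemble `{T_P, T_Q}` can be
pruned by subtree replacement operations so that the two resulting trees together
have exactly `2(N+2) + 2κ` inner nodes and the resulting ensemble makes at most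
`M − κ²` errors on the constructed training set. -/
theorem stmt15 (N : ℕ) (Eg : Finset (Fin N × Fin N))
    (hiso₁ : ∀ i : Fin N, ∃ j, (i, j) ∈ Eg)
    (hiso₂ : ∀ j : Fin N, ∃ i, (i, j) ∈ Eg)
    (κ : ℕ) (h1 : 1 ≤ κ) (h2 : κ ≤ N) :
    (∃ P' Q' : Finset (Fin N), P'.card = κ ∧ Q'.card = κ ∧
        ∀ i ∈ P', ∀ j ∈ Q', (i, j) ∈ Eg)
    ↔ ∃ R : DTree (Fin 3) × DTree (Fin 3),
        Relation.ReflTransGen (EnsStep (E15 N Eg)) (Tside N 0, Tside N 1) R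
        ∧ R.1.innerCount + R.2.innerCount = 2 * (N + 2) + 2 * κ
        ∧ (errCountEns R.1 R.2 (E15 N Eg) : ℤ) ≤ (Eg.card : ℤ) - (κ : ℤ) ^ 2 := by
  have hN : 0 < N := by omega
  have hM : 0 < Eg.card := by
    obtain ⟨j, hj⟩ := hiso₁ ⟨0, hN⟩
    exact Finset.card_pos.2 ⟨_, hj⟩
  have hsplit : ∀ K L : Finset (Fin N),
      (Eg.filter fun q => q.1 ∈ K ∧ q.2 ∈ L).card
        + (Eg.filter fun q => ¬ (q.1 ∈ K ∧ q.2 ∈ L)).card = Eg.card := fun K L =>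
    Finset.card_filter_add_card_filter_not _
  constructor
  · rintro ⟨K, L, hK, hL, hKL⟩
    refine ⟨(Biclique.sideTree 0 K, Biclique.sideTree 1 L),
      Biclique.reflTransGen_sideTree Eg K L, ?_, ?_⟩
    · rw [Biclique.innerCount_sideTree, Biclique.innerCount_sideTree]
      omega
    · rw [Biclique.errCountEns_sideTree]
      have hle : κ * κ ≤ (Eg.filter fun q => q.1 ∈ K ∧ q.2 ∈ L).card := by
        calc κ * κ = (K ×ˢ L).card := by rw [Finset.card_product, hK, hL]
          _ ≤ _ := Finset.card_le_card fun q hq => by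
            have hq' := Finset.mem_product.1 hq
            exact Finset.mem_filter.2 ⟨hKL _ hq'.1 _ hq'.2, hq'⟩
      have hs := hsplit K L
      zify at hle hs
      nlinarith
  · rintro ⟨⟨T₁, T₂⟩, hreach, hcount, herr⟩
    obtain ⟨hP, hQ⟩ := Biclique.prunedSide_of_reflTransGen Eg hN hM hreach
    simp only at hP hQ hcount herr
    have hlt : errCountEns T₁ T₂ (E15 N Eg) < Eg.card := by
      have hκ : (0 : ℤ) < (κ : ℤ) ^ 2 := by positivity
      omega
    rcases hP.intact_or_classify (by decide) with ⟨K, rfl⟩ | hred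
    swap
    · exact absurd (Biclique.card_le_errCountEns Eg (by decide) T₁ T₂ hred
        (hQ.classify_of_zero (Biclique.axis_other (by decide) (by decide) _ _))) hlt.not_ge
    rcases hQ.intact_or_classify (by decide) with ⟨L, rfl⟩ | hred
    swap
    · exact absurd (Biclique.card_le_errCountEns Eg (by decide) _ T₂
        (hP.classify_of_zero (Biclique.axis_other (by decide) (by decide) _ _)) hred) hlt.not_ge
    rw [Biclique.innerCount_sideTree, Biclique.innerCount_sideTree] at hcount
    rw [Biclique.errCountEns_sideTree] at herr
    have hs := hsplit K L
    have hsub : (Eg.filter fun q => q.1 ∈ K ∧ q.2 ∈ L) ⊆ K ×ˢ L := fun q hq =>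
      Finset.mem_product.2 (Finset.mem_filter.1 hq).2
    have hmul := (Finset.card_le_card hsub).trans_eq (Finset.card_product K L)
    have hsum : K.card + L.card = 2 * κ := by omega
    have hge : κ * κ ≤ (Eg.filter fun q => q.1 ∈ K ∧ q.2 ∈ L).card := by
      zify at hs ⊢
      nlinarith
    have hKκ : K.card = κ := by
      have hle : κ * κ ≤ K.card * L.card := hge.trans hmul
      zify at hle hsum ⊢
      have hsq : ((K.card : ℤ) - κ) ^ 2 ≤ 0 := by
        have hL : (L.card : ℤ) = 2 * κ - K.card := by linarith
        rw [hL] at hle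
        nlinarith
      have := pow_eq_zero_iff (two_ne_zero) |>.1 (le_antisymm hsq (sq_nonneg _))
      linarith
    have hLκ : L.card = κ := by omega
    refine ⟨K, L, hKκ, hLκ, fun i hi j hj => ?_⟩
    have heq := Finset.eq_of_subset_of_card_le hsub
      (by rw [Finset.card_product, hKκ, hLκ]; exact hge)
    have hmem : (i, j) ∈ K ×ˢ L := Finset.mem_product.2 ⟨hi, hj⟩
    rw [← heq] at hmem
    exact (Finset.mem_filter.1 hmem).1
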